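/- Let V be an allocation of h seats on a multi-level apportionment instance that fulfills both upper quota and lower quota, let p be any node of the tree, and let r be any real number with 0 < r ≤ R_p. For each a ∈ A(p) ∪ {p}, set e_a := (r/R_a)·V_a. Then max_{a ∈ A(p)∪{p}} e_a − min_{a ∈ A(p)∪{p}} e_a < 1, and consequently max_{a ∈ A(p)∪{p}} ⌊e_a⌋ ≤ min_{a ∈ A(p)∪{p}} ⌈e_a⌉. -/

import Mathlib

/-- A multi-level apportionment instance: a rooted tree on nodes `0, …, n`
(root `0`, encoded by a parent function with `parent i < i` for `i ≠ 0`),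
together with entitlements `W`. -/
structure MLA where
  n : ℕ
  parent : Fin (n + 1) → Fin (n + 1)
  parent_lt : ∀ i : Fin (n + 1), i ≠ 0 → (parent i : ℕ) < (i : ℕ)
  W : Fin (n + 1) → ℝ
  W_pos : ∀ i, 0 < W i
  W_le_one : ∀ i, W i ≤ 1
  W_root : W 0 = 1
  W_sum : ∀ i : Fin (n + 1),
    (Finset.univ.filter (fun c => c ≠ 0 ∧ parent c = i)).Nonempty →
    ∑ c ∈ Finset.univ.filter (fun c => c ≠ 0 ∧ parent c = i), W c = 1

namespace MLA

variable (T : MLA)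

/-- The set of children of node `i`. -/
def children (i : Fin (T.n + 1)) : Finset (Fin (T.n + 1)) :=
  Finset.univ.filter (fun c => c ≠ 0 ∧ T.parent c = i)

/-- The ancestor set `A(i)`: `A(0) = {0}` and `A(i) = {parent i} ∪ A(parent i)`. -/
def ancestors (i : Fin (T.n + 1)) : Finset (Fin (T.n + 1)) :=
  if h : i = 0 then {0} else insert (T.parent i) (ancestors (T.parent i))
termination_by (i : ℕ)
decreasing_by exact T.parent_lt i h

/-- The entitlement of node `i` relative to the root: `R i = ∏_{a ∈ A(i) ∪ {i}} W a`. -/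
def R (i : Fin (T.n + 1)) : ℝ := ∏ a ∈ insert i (T.ancestors i), T.W a

/-- `V` is an allocation of `h` seats. -/
def IsAlloc (h : ℕ) (V : Fin (T.n + 1) → ℕ) : Prop :=
  V 0 = h ∧ ∀ i, (T.children i).Nonempty → V i = ∑ c ∈ T.children i, V c

/-- `V` fulfills lower quota: `V i ≥ LQ i = max_{a ∈ A(i)} ⌊(R i / R a) · V a⌋`. -/
def FulfillsLowerQuota (V : Fin (T.n + 1) → ℕ) : Prop :=
  ∀ i, ∀ a ∈ T.ancestors i, ⌊T.R i / T.R a * (V a : ℝ)⌋ ≤ (V i : ℤ)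

/-- `V` fulfills upper quota: `V i ≤ UQ i = min_{a ∈ A(i)} ⌈(R i / R a) · V a⌉`. -/
def FulfillsUpperQuota (V : Fin (T.n + 1) → ℕ) : Prop :=
  ∀ i, ∀ a ∈ T.ancestors i, (V i : ℤ) ≤ ⌈T.R i / T.R a * (V a : ℝ)⌉


/-- `P` is the set of nodes receiving the new seat in one step of an iterative
method with selection criterion `crit` (to be minimized among children) and
eligibility constraint `elig`: `P` is a root-to-leaf path, each non-root node on
the path is an eligible child of its parent minimizing `crit` among all eligible
children, and the seat counts along `P` each increase by one. -/
def IsStepWith (crit : (Fin (T.n + 1) → ℕ) → Fin (T.n + 1) → ℝ)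
    (elig : (Fin (T.n + 1) → ℕ) → Fin (T.n + 1) → Prop)
    (P : Finset (Fin (T.n + 1))) (Vh Vh1 : Fin (T.n + 1) → ℕ) : Prop :=
  (0 : Fin (T.n + 1)) ∈ P ∧
  (∀ i ∈ P, i ≠ 0 → T.parent i ∈ P) ∧
  (∀ i ∈ P, (T.children i).Nonempty → ∃ c ∈ T.children i, c ∈ P) ∧
  (∀ c ∈ P, ∀ d ∈ P, c ≠ 0 → d ≠ 0 → T.parent c = T.parent d → c = d) ∧
  (∀ c ∈ P, c ≠ 0 → elig Vh c ∧
    ∀ d ∈ T.children (T.parent c), elig Vh d → crit Vh c ≤ crit Vh d) ∧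
  (∀ i, Vh1 i = Vh i + if i ∈ P then 1 else 0)

/-- `V : ℕ → (nodes → ℕ)` is a run of the iterative method given by `crit` and
`elig` (with arbitrary tie-breaking): `V 0` is the all-zero allocation and each
`V (h+1)` is obtained from `V h` by allocating one more seat along a path. -/
def IsRun (crit : (Fin (T.n + 1) → ℕ) → Fin (T.n + 1) → ℝ)
    (elig : (Fin (T.n + 1) → ℕ) → Fin (T.n + 1) → Prop)
    (V : ℕ → Fin (T.n + 1) → ℕ) : Prop :=
  (∀ i, V 0 i = 0) ∧ ∀ h, ∃ P, T.IsStepWith crit elig P (V h) (V (h + 1))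

/-- Adams' criterion: a child `c` minimizing `V c / R c` receives the seat. -/
noncomputable def adamsCrit (V : Fin (T.n + 1) → ℕ) (c : Fin (T.n + 1)) : ℝ :=
  (V c : ℝ) / T.R c

/-- Jefferson's criterion: a child `c` minimizing `(V c + 1) / R c` receives the seat. -/
noncomputable def jeffersonCrit (V : Fin (T.n + 1) → ℕ) (c : Fin (T.n + 1)) : ℝ :=
  ((V c : ℝ) + 1) / T.R c

/-- Trivial eligibility constraint: every child is eligible. -/
def trivElig (_ : Fin (T.n + 1) → ℕ) (_ : Fin (T.n + 1)) : Prop := True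

/-- Eligibility constraint of the quota method: `V c / W c < V (parent c) + 1`. -/
def quotaElig (V : Fin (T.n + 1) → ℕ) (c : Fin (T.n + 1)) : Prop :=
  (V c : ℝ) / T.W c < (V (T.parent c) : ℝ) + 1

/-- Eligibility constraint of the upper-compliant quota method:
`V c / R c < (V a + 1) / R a` for every ancestor `a` of `c`. -/
def ucElig (V : Fin (T.n + 1) → ℕ) (c : Fin (T.n + 1)) : Prop :=
  ∀ a ∈ T.ancestors c, (V c : ℝ) / T.R c < ((V a : ℝ) + 1) / T.R a

end MLA

/-!
The nodes of `A(p) ∪ {p}` form a chain, so of any two of them one is an ancestor of the other,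
say `a` of `b`. The quotas of `b` relative to `a` place `V b` within distance less than one of
`(R b / R a) · V a`, and passing to the scale `r` multiplies this distance by `|r / R b| ≤ 1`,
because `R` can only increase towards the root.
-/

section FloorRing

variable {K : Type*} [Ring K] [LinearOrder K] [IsOrderedRing K] [FloorRing K]

theorem abs_intCast_sub_lt_one {x : K} {z : ℤ} (hfloor : ⌊x⌋ ≤ z) (hceil : z ≤ ⌈x⌉) :
    |(z : K) - x| < 1 :=
  abs_sub_lt_iff.2
    ⟨sub_lt_comm.1 (Int.le_ceil_iff.1 hceil), sub_left_lt_of_lt_add (Int.floor_le_iff.1 hfloor)⟩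

theorem floor_le_ceil_of_sub_lt_one {x y : K} (h : x - y < 1) : ⌊x⌋ ≤ ⌈y⌉ :=
  Int.floor_le_iff.2 <| calc
    x < y + 1 := sub_lt_iff_lt_add'.1 h
    _ ≤ ⌈y⌉ + 1 := by gcongr; exact Int.le_ceil y

end FloorRing

namespace MLA

variable {T : MLA}

/-- The path `A(i) ∪ {i}` from the node `i` up to the root, over which `R i` is a product. -/
def lineage (T : MLA) (i : Fin (T.n + 1)) : Finset (Fin (T.n + 1)) :=
  insert i (T.ancestors i)

@[elab_as_elim]
theorem parent_induction {motive : Fin (T.n + 1) → Prop} (root : motive 0)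
    (step : ∀ i, i ≠ 0 → motive (T.parent i) → motive i) (i : Fin (T.n + 1)) : motive i := by
  induction i using WellFoundedLT.induction with
  | ind i ih =>
    rcases eq_or_ne i 0 with rfl | hi
    · exact root
    · exact step i hi (ih _ (T.parent_lt i hi))

theorem lineage_zero : T.lineage 0 = {0} := by
  simp [lineage, ancestors]

theorem lineage_of_ne_zero {i : Fin (T.n + 1)} (hi : i ≠ 0) :
    T.lineage i = insert i (T.lineage (T.parent i)) := by
  rw [lineage, ancestors, dif_neg hi, lineage]

theorem self_mem_lineage (i : Fin (T.n + 1)) : i ∈ T.lineage i :=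
  Finset.mem_insert_self _ _

theorem lineage_subset {a p : Fin (T.n + 1)} (ha : a ∈ T.lineage p) :
    T.lineage a ⊆ T.lineage p := by
  induction p using parent_induction with
  | root =>
    rw [lineage_zero, Finset.mem_singleton] at ha
    rw [ha]
  | step p hp ih =>
    rw [lineage_of_ne_zero hp, Finset.mem_insert] at ha
    rcases ha with rfl | ha
    · rfl
    · rw [lineage_of_ne_zero hp]
      exact (ih ha).trans (Finset.subset_insert _ _)

theorem mem_lineage_or_mem_lineage {a b p : Fin (T.n + 1)}
    (ha : a ∈ T.lineage p) (hb : b ∈ T.lineage p) : a ∈ T.lineage b ∨ b ∈ T.lineage a := by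
  induction p using parent_induction with
  | root =>
    rw [lineage_zero, Finset.mem_singleton] at ha hb
    subst ha hb
    exact .inl (self_mem_lineage 0)
  | step p hp ih =>
    have hinsert {i} : i ∈ T.lineage p ↔ i = p ∨ i ∈ T.lineage (T.parent p) := by
      rw [lineage_of_ne_zero hp, Finset.mem_insert]
    rcases hinsert.1 ha with rfl | ha'
    · exact .inr hb
    rcases hinsert.1 hb with rfl | hb'
    · exact .inl ha
    · exact ih ha' hb'

theorem R_pos (i : Fin (T.n + 1)) : 0 < T.R i :=
  Finset.prod_pos fun a _ => T.W_pos a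

theorem R_le_of_mem_lineage {a p : Fin (T.n + 1)} (ha : a ∈ T.lineage p) : T.R p ≤ T.R a :=
  Finset.prod_le_prod_of_subset_of_le_one (lineage_subset ha)
    (fun i _ => (T.W_pos i).le) (fun i _ _ => T.W_le_one i)

section ScaledSeats

variable {V : Fin (T.n + 1) → ℕ} {a b p : Fin (T.n + 1)} {r : ℝ}

/-- The number `e_a = (r / R a) · V a`: what a node of entitlement `r` relative to the root would
receive in exact proportion to the seats of `a`. At `r = R b` it is the exact quota of `b`
relative to `a`. -/
noncomputable def scaledSeats (T : MLA) (V : Fin (T.n + 1) → ℕ) (r : ℝ) (a : Fin (T.n + 1)) : ℝ :=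
  r / T.R a * V a

theorem scaledSeats_R_self (V : Fin (T.n + 1) → ℕ) (a : Fin (T.n + 1)) :
    T.scaledSeats V (T.R a) a = V a := by
  rw [scaledSeats, div_self (R_pos a).ne', one_mul]

theorem scaledSeats_eq_div_mul (V : Fin (T.n + 1) → ℕ) (r : ℝ) {s : ℝ} (hs : s ≠ 0)
    (a : Fin (T.n + 1)) : T.scaledSeats V r a = r / s * T.scaledSeats V s a := by
  rw [scaledSeats, scaledSeats, ← mul_assoc, div_mul_div_cancel₀ hs]

theorem abs_seats_sub_scaledSeats_R_lt_one (hlq : T.FulfillsLowerQuota V)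
    (huq : T.FulfillsUpperQuota V) (hab : a ∈ T.lineage b) :
    |V b - T.scaledSeats V (T.R b) a| < 1 := by
  rcases Finset.mem_insert.1 hab with rfl | hab
  · simp [scaledSeats_R_self]
  · exact_mod_cast abs_intCast_sub_lt_one (hlq b a hab) (huq b a hab)

theorem abs_scaledSeats_sub_lt_one_of_mem_lineage (hlq : T.FulfillsLowerQuota V)
    (huq : T.FulfillsUpperQuota V) (hr : |r| ≤ T.R b) (hab : a ∈ T.lineage b) :
    |T.scaledSeats V r b - T.scaledSeats V r a| < 1 := by
  have hRb : 0 < T.R b := R_pos b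
  have hscale : |r / T.R b| ≤ 1 := by
    rwa [abs_div, abs_of_pos hRb, div_le_one hRb]
  calc |T.scaledSeats V r b - T.scaledSeats V r a|
      = |r / T.R b| * |V b - T.scaledSeats V (T.R b) a| := by
        rw [scaledSeats_eq_div_mul V r hRb.ne' a, scaledSeats, ← mul_sub, abs_mul]
    _ < 1 := mul_lt_one_of_nonneg_of_lt_one_right hscale (abs_nonneg _)
        (abs_seats_sub_scaledSeats_R_lt_one hlq huq hab)

theorem abs_scaledSeats_sub_lt_one (hlq : T.FulfillsLowerQuota V)
    (huq : T.FulfillsUpperQuota V) (hr : |r| ≤ T.R p)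
    (ha : a ∈ T.lineage p) (hb : b ∈ T.lineage p) :
    |T.scaledSeats V r a - T.scaledSeats V r b| < 1 := by
  rcases mem_lineage_or_mem_lineage ha hb with hab | hba
  · rw [abs_sub_comm]
    exact abs_scaledSeats_sub_lt_one_of_mem_lineage hlq huq (hr.trans (R_le_of_mem_lineage hb)) hab
  · exact abs_scaledSeats_sub_lt_one_of_mem_lineage hlq huq (hr.trans (R_le_of_mem_lineage ha)) hba

end ScaledSeats

end MLA

theorem quota_window_nonempty_general (T : MLA) (V : Fin (T.n + 1) → ℕ)
    (hlq : T.FulfillsLowerQuota V) (huq : T.FulfillsUpperQuota V)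
    (p : Fin (T.n + 1)) (r : ℝ) (hr : |r| ≤ T.R p) :
    (∀ a₁ ∈ T.lineage p, ∀ a₂ ∈ T.lineage p,
      T.scaledSeats V r a₁ - T.scaledSeats V r a₂ < 1) ∧
    (∀ a₁ ∈ T.lineage p, ∀ a₂ ∈ T.lineage p,
      ⌊T.scaledSeats V r a₁⌋ ≤ ⌈T.scaledSeats V r a₂⌉) := by
  have hwindow : ∀ a₁ ∈ T.lineage p, ∀ a₂ ∈ T.lineage p,
      T.scaledSeats V r a₁ - T.scaledSeats V r a₂ < 1 := fun _ h₁ _ h₂ =>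
    (le_abs_self _).trans_lt (MLA.abs_scaledSeats_sub_lt_one hlq huq hr h₁ h₂)
  exact ⟨hwindow, fun a₁ h₁ a₂ h₂ => floor_le_ceil_of_sub_lt_one (hwindow a₁ h₁ a₂ h₂)⟩

/-- If `V` fulfills both quotas, `p` is any node and
`0 < r ≤ R p`, then with `e a := (r / R a) · V a` for `a ∈ A(p) ∪ {p}`, the
maximum and minimum of the `e a` differ by less than 1 (stated pairwise), and
consequently `max ⌊e a⌋ ≤ min ⌈e a⌉` (stated pairwise). -/
theorem quota_window_nonempty (T : MLA) (h : ℕ) (V : Fin (T.n + 1) → ℕ)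
    (hV : T.IsAlloc h V) (hlq : T.FulfillsLowerQuota V) (huq : T.FulfillsUpperQuota V)
    (p : Fin (T.n + 1)) (r : ℝ) (hr : 0 < r) (hrR : r ≤ T.R p) :
    (∀ a₁ ∈ insert p (T.ancestors p), ∀ a₂ ∈ insert p (T.ancestors p),
      r / T.R a₁ * (V a₁ : ℝ) - r / T.R a₂ * (V a₂ : ℝ) < 1) ∧
    (∀ a₁ ∈ insert p (T.ancestors p), ∀ a₂ ∈ insert p (T.ancestors p),
      ⌊r / T.R a₁ * (V a₁ : ℝ)⌋ ≤ ⌈r / T.R a₂ * (V a₂ : ℝ)⌉) :=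
  quota_window_nonempty_general T V hlq huq p r (by rwa [abs_of_pos hr])
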